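/- Let A be a finite alphabet, σ : A* → A* a primitive substitution, and x an infinite word over A that is an aperiodic fixed point of σ. Then x is linearly recurrent: there exists a constant K such that x is uniformly recurrent and for every factor u of x and every return w to u in x one has |w| ≤ K|u|. -/

import Mathlib

/-- The factor of the infinite word `x` of length `n` starting at position `i`,
i.e. the word `x_i x_{i+1} ⋯ x_{i+n-1}`. -/
def seg {A : Type*} (x : ℕ → A) (i n : ℕ) : List A :=
  (List.range n).map fun k => x (i + k)

/-- `u` is a (nonempty, finite) factor of the infinite word `x`. -/
def IsFactor {A : Type*} (x : ℕ → A) (u : List A) : Prop :=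
  u ≠ [] ∧ ∃ i, u = seg x i u.length

/-- `u` is a (finite) prefix of the infinite word `x`. -/
def IsPrefixOf {A : Type*} (x : ℕ → A) (u : List A) : Prop :=
  u = seg x 0 u.length

/-- The finite word `u` occurs in the finite word `v` at position `i`. -/
def OccursAt {A : Type*} (u v : List A) (i : ℕ) : Prop :=
  i + u.length ≤ v.length ∧ (v.drop i).take u.length = u

/-- `w` is a return word to `u` in `x`: `w` is nonempty, `w ++ u` is a factor of
`x`, and `u` occurs exactly twice in `w ++ u`. -/
def IsReturn {A : Type*} (x : ℕ → A) (u w : List A) : Prop :=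
  w ≠ [] ∧ IsFactor x (w ++ u) ∧ {i | OccursAt u (w ++ u) i}.ncard = 2

/-- The set of return words to `u` in `x`. -/
def Ret {A : Type*} (x : ℕ → A) (u : List A) : Set (List A) :=
  {w | IsReturn x u w}

/-- `x` is uniformly recurrent: every factor has a nonempty and finite set of
return words. -/
def UniformlyRecurrent {A : Type*} (x : ℕ → A) : Prop :=
  ∀ u, IsFactor x u → (Ret x u).Nonempty ∧ (Ret x u).Finite

/-- `x` is aperiodic: there is no `n ≥ 1` with `x (i + n) = x i` for all `i`. -/
def Aperiodic {A : Type*} (x : ℕ → A) : Prop :=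
  ¬ ∃ n : ℕ, 1 ≤ n ∧ ∀ i : ℕ, x (i + n) = x i

/-- Apply a substitution (given by its action `σ` on letters) to a finite word. -/
def substApply {A : Type*} (σ : A → List A) (w : List A) : List A :=
  (w.map σ).flatten

/-- `σ^n` applied to a letter. -/
def substIter {A : Type*} (σ : A → List A) : ℕ → A → List A
  | 0, a => [a]
  | n + 1, a => substApply σ (substIter σ n a)

/-- The substitution `σ` is primitive: some power `σ^n` maps every letter to a word
containing every letter. -/
def Primitive {A : Type*} (σ : A → List A) : Prop :=
  ∃ n : ℕ, ∀ a b : A, a ∈ substIter σ n b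

/-- The infinite word `x` is a fixed point of the substitution `σ`: applying `σ`
letterwise to `x` and concatenating gives back `x`, i.e. the image of every finite
prefix of `x` is again a prefix of `x`. -/
def IsFixedPoint {A : Type*} (σ : A → List A) (x : ℕ → A) : Prop :=
  ∀ n : ℕ, IsPrefixOf x (substApply σ (seg x 0 n))

/-!
By primitivity the lengths `|σ^n(a)|`, for `a` a letter, are comparable uniformly in `n`, and over
at least two letters they tend to infinity while growing by at most a constant factor from `n` to
`n + 1`. Hence for each length `m` there is an `n` with `m ≤ |σ^n(a)| ≤ C m` for all letters `a`.
A factor `u` of `x = σ^n(x)` of length `m` straddles at most two consecutive blocks, so it is an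
infix of `σ^n(ab)` for a two-letter factor `ab` of `x`. There are finitely many such `ab`, so
a single `k` makes all of them infixes of every `σ^k(c)`. Thus `u` is an infix of every block
`σ^(n+k)(c)`, and those have length at most `C' m`; every window of `x` of length `2 C' m` contains
a whole block, and so an occurrence of `u`.
-/

section Seg

variable {A : Type*} {x : ℕ → A} {i j m n : ℕ} {u : List A}

@[simp]
lemma length_seg (x : ℕ → A) (i n : ℕ) : (seg x i n).length = n := by simp [seg]

@[simp]
lemma seg_one (x : ℕ → A) (i : ℕ) : seg x i 1 = [x i] := by simp [seg]

lemma seg_add (x : ℕ → A) (i m n : ℕ) : seg x i (m + n) = seg x i m ++ seg x (i + m) n := by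
  simp [seg, List.range_add, Function.comp_def, add_assoc]

lemma take_drop_seg (x : ℕ → A) (i : ℕ) (h : j + m ≤ n) :
    ((seg x i n).drop j).take m = seg x (i + j) m := by
  obtain ⟨r, rfl⟩ := Nat.exists_eq_add_of_le h
  rw [seg_add, seg_add, List.append_assoc, List.drop_left' (length_seg ..),
    List.take_left' (length_seg ..)]

lemma seg_infix_seg (hij : i ≤ j) (hjm : j + m ≤ i + n) : seg x j m <:+: seg x i n := by
  obtain ⟨k, rfl⟩ := Nat.exists_eq_add_of_le hij
  rw [← take_drop_seg x i (show k + m ≤ n by omega)]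
  exact (List.take_prefix ..).isInfix.trans (List.drop_suffix ..).isInfix

lemma eq_seg_of_append_eq_seg {v : List A} (h : u ++ v = seg x i n) :
    u = seg x i u.length ∧ v = seg x (i + u.length) v.length := by
  have hn : n = u.length + v.length := by simpa using (congrArg List.length h).symm
  rw [hn, seg_add] at h
  exact List.append_inj h (by simp)

lemma exists_eq_seg_of_infix_seg (h : u <:+: seg x i n) :
    ∃ j, i ≤ j ∧ j + u.length ≤ i + n ∧ u = seg x j u.length := by
  obtain ⟨s, t, hst⟩ := h
  have hlen : s.length + u.length + t.length = n := by
    simpa [add_assoc] using congrArg List.length hst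
  obtain ⟨hsu, -⟩ := eq_seg_of_append_eq_seg hst
  exact ⟨i + s.length, by omega, by omega, (eq_seg_of_append_eq_seg hsu).2⟩

lemma occursAt_seg_iff {k : ℕ} :
    OccursAt u (seg x i n) k ↔ k + u.length ≤ n ∧ u = seg x (i + k) u.length := by
  rw [OccursAt, length_seg]
  refine and_congr_right fun h => ?_
  rw [take_drop_seg x i h, eq_comm]

lemma exists_forall_seg_infix_prefix [Finite A] (x : ℕ → A) (n : ℕ) :
    ∃ m, ∀ i, seg x i n <:+: seg x 0 m := by
  let f : ℕ → List A := fun i => seg x i n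
  have hfin : (Set.range f).Finite :=
    (List.finite_length_eq A n).subset (by rintro _ ⟨i, rfl⟩; exact length_seg x i n)
  have := hfin.to_subtype
  obtain ⟨b, hb⟩ := (Set.finite_range (Set.rangeSplitting f)).bddAbove
  refine ⟨b + n, fun i => ?_⟩
  have hfirst : Set.rangeSplitting f ⟨f i, i, rfl⟩ ≤ b := hb ⟨_, rfl⟩
  rw [show seg x i n = seg x (Set.rangeSplitting f ⟨f i, i, rfl⟩) n from
    (Set.apply_rangeSplitting f ⟨f i, i, rfl⟩).symm]
  exact seg_infix_seg (Nat.zero_le _) (by omega)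

end Seg

section BoundedGaps

variable {A : Type*} {x : ℕ → A} {u w : List A} {L : ℕ}

/-- The word `u` occurs in the infinite word `x` with gaps at most `L`: every window of `L`
consecutive positions of `x` contains the starting position of an occurrence of `u`. -/
def BoundedGaps (x : ℕ → A) (u : List A) (L : ℕ) : Prop :=
  ∀ q, ∃ p, q ≤ p ∧ p < q + L ∧ u = seg x p u.length

/- `IsReturn` does not ask `u` to be a prefix of `w ++ u`, hence the bound `2 * L` in place of `L`:
a longer `w` would give three occurrences, in `[0, L)`, in `[L, 2 * L)` and at `w.length`. -/
lemma BoundedGaps.length_le_of_isReturn (hu : BoundedGaps x u L) (hw : IsReturn x u w) :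
    w.length ≤ 2 * L := by
  obtain ⟨-, ⟨-, i, hi⟩, hcard⟩ := hw
  by_contra! hlt
  have hlast : u = seg x (i + w.length) u.length := (eq_seg_of_append_eq_seg hi).2
  obtain ⟨p, hip, hpL, hp⟩ := hu i
  obtain ⟨q, hiq, hqL, hq⟩ := hu (i + L)
  rw [hi, List.length_append] at hcard
  have hmem : ∀ k ≤ w.length, u = seg x (i + k) u.length →
      k ∈ {k | OccursAt u (seg x i (w.length + u.length)) k} := fun k hk h =>
    occursAt_seg_iff.2 ⟨by omega, h⟩
  have hthree : 2 < {k | OccursAt u (seg x i (w.length + u.length)) k}.ncard := by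
    rw [Set.two_lt_ncard_iff (Set.finite_of_ncard_ne_zero (by omega))]
    refine ⟨p - i, q - i, w.length, hmem _ (by omega) ?_, hmem _ (by omega) ?_,
      hmem _ le_rfl hlast, by omega, by omega, by omega⟩
    · rwa [Nat.add_sub_cancel' hip]
    · rwa [Nat.add_sub_cancel' (by omega)]
  omega

lemma isReturn_seg {i d : ℕ} (hd : 0 < d) (hu0 : u ≠ []) (hi : u = seg x i u.length)
    (hid : u = seg x (i + d) u.length)
    (hnot : ∀ k, 0 < k → k < d → u ≠ seg x (i + k) u.length) : IsReturn x u (seg x i d) := by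
  have happ : seg x i d ++ u = seg x i (d + u.length) := by rw [seg_add, ← hid]
  refine ⟨List.ne_nil_of_length_pos (by simpa), ⟨by simp [hu0], i, by simp [happ]⟩, ?_⟩
  have hocc : {k | OccursAt u (seg x i d ++ u) k} = {0, d} := by
    ext k
    rw [happ, Set.mem_ofPred_eq, occursAt_seg_iff, Set.mem_insert_iff, Set.mem_singleton_iff]
    constructor
    · rintro ⟨hkd, hk⟩
      by_contra! hne
      exact hnot k (by omega) (by omega) hk
    · rintro (rfl | rfl)
      · exact ⟨by omega, hi⟩
      · exact ⟨le_rfl, hid⟩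
  rw [hocc, Set.ncard_pair hd.ne]

lemma BoundedGaps.ret_nonempty (hu : BoundedGaps x u L) (hu0 : u ≠ []) : (Ret x u).Nonempty := by
  classical
  obtain ⟨i, -, -, hi⟩ := hu 0
  have hnext : ∃ d, 0 < d ∧ u = seg x (i + d) u.length := by
    obtain ⟨p, hip, -, hp⟩ := hu (i + 1)
    exact ⟨p - i, by omega, by rwa [Nat.add_sub_cancel' (by omega)]⟩
  obtain ⟨hpos, hocc⟩ := Nat.find_spec hnext
  exact ⟨_, isReturn_seg hpos hu0 hi hocc fun k hk hlt h => Nat.find_min hnext hlt ⟨hk, h⟩⟩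

lemma BoundedGaps.ret_finite [Finite A] (hu : BoundedGaps x u L) : (Ret x u).Finite :=
  (List.finite_length_le A (2 * L)).subset fun _ hw => hu.length_le_of_isReturn hw

end BoundedGaps

section Substitution

variable {A : Type*} {σ : A → List A}

lemma substApply_eq_flatMap (σ : A → List A) (w : List A) : substApply σ w = w.flatMap σ := rfl

lemma substApply_append (σ : A → List A) (v w : List A) :
    substApply σ (v ++ w) = substApply σ v ++ substApply σ w :=
  List.flatMap_append

lemma substApply_substIter_zero (σ : A → List A) (w : List A) :
    substApply (substIter σ 0) w = w :=
  List.flatMap_singleton' w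

lemma substApply_substIter_succ (σ : A → List A) (n : ℕ) (w : List A) :
    substApply (substIter σ (n + 1)) w = substApply σ (substApply (substIter σ n) w) :=
  List.flatMap_assoc.symm

lemma substIter_add (σ : A → List A) (m n : ℕ) (a : A) :
    substIter σ (m + n) a = substApply (substIter σ m) (substIter σ n a) := by
  induction m with
  | zero => rw [zero_add, substApply_substIter_zero]
  | succ m ih => rw [Nat.succ_add, substIter, ih, substApply_substIter_succ]

lemma length_substApply_le {M : ℕ} (h : ∀ a, (σ a).length ≤ M) (w : List A) :
    (substApply σ w).length ≤ M * w.length := by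
  simpa [substApply_eq_flatMap, List.length_flatMap, mul_comm] using
    List.sum_le_card_nsmul (w.map fun a => (σ a).length) M (by simpa using fun a _ => h a)

lemma le_length_substApply {M : ℕ} (h : ∀ a, M ≤ (σ a).length) (w : List A) :
    M * w.length ≤ (substApply σ w).length := by
  simpa [substApply_eq_flatMap, List.length_flatMap, mul_comm] using
    List.card_nsmul_le_sum (w.map fun a => (σ a).length) M (by simpa using fun a _ => h a)

lemma exists_forall_length_le [Finite A] (σ : A → List A) : ∃ M, ∀ a, (σ a).length ≤ M := by
  obtain ⟨M, hM⟩ := (Set.finite_range fun a => (σ a).length).bddAbove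
  exact ⟨M, fun a => hM ⟨a, rfl⟩⟩

end Substitution

section Primitive

variable {A : Type*} {σ : A → List A}

lemma Primitive.finite [Nonempty A] (hσ : Primitive σ) : Finite A := by
  obtain ⟨N, hN⟩ := hσ
  inhabit A
  exact Set.finite_univ_iff.1 ((List.finite_toSet (substIter σ N default)).subset fun a _ => hN a _)

lemma Primitive.exists_length_substIter_le_mul [Finite A] (hσ : Primitive σ) :
    ∃ C, ∀ n a b, (substIter σ n a).length ≤ C * (substIter σ n b).length := by
  obtain ⟨N, hN⟩ := hσ
  obtain ⟨C, hC⟩ := exists_forall_length_le (substIter σ N)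
  refine ⟨C, fun n a b => ?_⟩
  calc (substIter σ n a).length
      ≤ (substApply (substIter σ n) (substIter σ N b)).length :=
        (List.infix_flatMap_of_mem (hN a b) (substIter σ n)).length_le
    _ = (substApply (substIter σ N) (substIter σ n b)).length := by
        rw [← substIter_add, add_comm, substIter_add]
    _ ≤ C * (substIter σ n b).length := length_substApply_le hC _

lemma two_le_length_of_mem {a b : A} {w : List A} (hab : a ≠ b) (ha : a ∈ w) (hb : b ∈ w) :
    2 ≤ w.length := by
  by_contra! hlt
  obtain ⟨i, hi, rfl⟩ := List.getElem_of_mem ha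
  obtain ⟨j, hj, rfl⟩ := List.getElem_of_mem hb
  exact hab (by congr 1; omega)

lemma Primitive.exists_forall_le_length_substIter [Nontrivial A] (hσ : Primitive σ) (m : ℕ) :
    ∃ n, ∀ a, m ≤ (substIter σ n a).length := by
  obtain ⟨N, hN⟩ := hσ
  obtain ⟨b, c, hbc⟩ := exists_pair_ne A
  have htwo (a : A) : 2 ≤ (substIter σ N a).length := two_le_length_of_mem hbc (hN b a) (hN c a)
  have hgrow (k : ℕ) (a : A) : k < (substIter σ (N * k) a).length := by
    induction k with
    | zero => simp [substIter]
    | succ k ih =>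
      have hdouble := le_length_substApply htwo (substIter σ (N * k) a)
      rw [Nat.mul_succ, add_comm (N * k) N, substIter_add]
      omega
  exact ⟨N * m, fun a => (hgrow m a).le⟩

lemma Primitive.exists_length_substIter_comparable [Finite A] [Nontrivial A] (hσ : Primitive σ) :
    ∃ K, ∀ m, 0 < m →
      ∃ n, ∀ a, m ≤ (substIter σ n a).length ∧ (substIter σ n a).length ≤ K * m := by
  classical
  obtain ⟨C, hC⟩ := hσ.exists_length_substIter_le_mul
  obtain ⟨M, hM⟩ := exists_forall_length_le σ
  refine ⟨M * C + 1, fun m hm => ?_⟩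
  have hlong := hσ.exists_forall_le_length_substIter m
  refine ⟨Nat.find hlong, fun a => ⟨Nat.find_spec hlong a, ?_⟩⟩
  rcases hn : Nat.find hlong with _ | n
  · exact Nat.mul_pos (Nat.succ_pos _) hm
  · obtain ⟨b, hb⟩ : ∃ b, (substIter σ n b).length < m := by
      simpa using Nat.find_min hlong (m := n) (by omega)
    calc (substIter σ (n + 1) a).length
        ≤ M * (substIter σ n a).length := length_substApply_le hM _
      _ ≤ M * (C * (substIter σ n b).length) := Nat.mul_le_mul_left _ (hC n a b)
      _ ≤ M * (C * m) := by gcongr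
      _ ≤ (M * C + 1) * m := by linarith

end Primitive

section FixedPoint

variable {A : Type*} {σ : A → List A} {x : ℕ → A}

lemma IsFixedPoint.substIter (hx : IsFixedPoint σ x) (n : ℕ) :
    IsFixedPoint (substIter σ n) x := by
  intro m
  induction n with
  | zero => simp [IsPrefixOf, substApply_substIter_zero]
  | succ n ih =>
    rw [substApply_substIter_succ, ih]
    exact hx _

/-- The position in `x = σ(x)` at which the block `σ(x_i)` starts, that is, the length of
`σ(x_0 ⋯ x_{i-1})`. -/
def cutPoint (σ : A → List A) (x : ℕ → A) (i : ℕ) : ℕ :=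
  (substApply σ (seg x 0 i)).length

@[simp]
lemma cutPoint_zero (σ : A → List A) (x : ℕ → A) : cutPoint σ x 0 = 0 := rfl

lemma cutPoint_add (σ : A → List A) (x : ℕ → A) (i m : ℕ) :
    cutPoint σ x (i + m) = cutPoint σ x i + (substApply σ (seg x i m)).length := by
  simp [cutPoint, seg_add, substApply_append]

lemma cutPoint_succ (σ : A → List A) (x : ℕ → A) (i : ℕ) :
    cutPoint σ x (i + 1) = cutPoint σ x i + (σ (x i)).length := by
  simp [cutPoint_add, substApply]

lemma exists_cutPoint_le_lt (hσ : ∀ a, 0 < (σ a).length) (x : ℕ → A) (q : ℕ) :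
    ∃ t, cutPoint σ x t ≤ q ∧ q < cutPoint σ x (t + 1) := by
  induction q with
  | zero => exact ⟨0, by simp, by simpa [cutPoint_succ] using hσ (x 0)⟩
  | succ q ih =>
    obtain ⟨t, hle, hlt⟩ := ih
    by_cases hq : q + 1 < cutPoint σ x (t + 1)
    · exact ⟨t, by omega, hq⟩
    · have := hσ (x (t + 1))
      exact ⟨t + 1, by omega, by rw [cutPoint_succ]; omega⟩

lemma IsFixedPoint.substApply_seg (hx : IsFixedPoint σ x) (i m : ℕ) :
    substApply σ (seg x i m) = seg x (cutPoint σ x i) (substApply σ (seg x i m)).length := by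
  have h := hx (i + m)
  rw [IsPrefixOf, seg_add, zero_add, substApply_append] at h
  simpa [cutPoint] using (eq_seg_of_append_eq_seg h).2

lemma IsFixedPoint.apply_eq_seg (hx : IsFixedPoint σ x) (i : ℕ) :
    σ (x i) = seg x (cutPoint σ x i) (σ (x i)).length := by
  simpa [substApply] using hx.substApply_seg i 1

lemma IsFixedPoint.boundedGaps_of_forall_infix (hx : IsFixedPoint σ x) {u : List A} {B : ℕ}
    (hu0 : u ≠ []) (hu : ∀ a, u <:+: σ a) (hB : ∀ a, (σ a).length ≤ B) :
    BoundedGaps x u (2 * B) := by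
  intro q
  have hpos : 0 < u.length := List.length_pos_of_ne_nil hu0
  obtain ⟨t, hle, hlt⟩ := exists_cutPoint_le_lt (fun a => hpos.trans_le (hu a).length_le) x q
  have hblock := hu (x (t + 1))
  rw [hx.apply_eq_seg] at hblock
  obtain ⟨p, hp, hpu, hup⟩ := exists_eq_seg_of_infix_seg hblock
  have hB₁ := hB (x t)
  have hB₂ := hB (x (t + 1))
  rw [cutPoint_succ] at hlt hp hpu
  exact ⟨p, by omega, by omega, hup⟩

lemma IsFixedPoint.exists_seg_infix_substApply_pair (hx : IsFixedPoint σ x) {m : ℕ} (hm : 0 < m)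
    (hσ : ∀ a, m ≤ (σ a).length) (i : ℕ) :
    ∃ t, seg x i m <:+: substApply σ (seg x t 2) := by
  obtain ⟨t, hle, hlt⟩ := exists_cutPoint_le_lt (fun a => hm.trans_le (hσ a)) x i
  refine ⟨t, ?_⟩
  rw [hx.substApply_seg]
  refine seg_infix_seg hle ?_
  have := hσ (x (t + 1))
  rw [← cutPoint_add, cutPoint_succ]
  omega

end FixedPoint

section LinearRecurrence

variable {A : Type*} {σ : A → List A} {x : ℕ → A}

lemma Primitive.exists_forall_seg_infix_substIter [Finite A] [Nontrivial A] (hσ : Primitive σ)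
    (hx : IsFixedPoint σ x) (ℓ : ℕ) : ∃ k, ∀ i a, seg x i ℓ <:+: substIter σ k a := by
  obtain ⟨m, hm⟩ := exists_forall_seg_infix_prefix x ℓ
  obtain ⟨n, hn⟩ := hσ.exists_forall_le_length_substIter m
  obtain ⟨N, hN⟩ := hσ
  refine ⟨n + N, fun i a => ?_⟩
  have hprefix : seg x 0 m <:+: substIter σ n (x 0) := by
    rw [(hx.substIter n).apply_eq_seg 0]
    exact seg_infix_seg le_rfl (by simpa using hn (x 0))
  rw [substIter_add]
  exact (hm i).trans (hprefix.trans (List.infix_flatMap_of_mem (hN (x 0) a) _))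

lemma Primitive.exists_infix_substIter_length_le [Finite A] [Nontrivial A] (hσ : Primitive σ)
    (hx : IsFixedPoint σ x) :
    ∃ K, ∀ u, IsFactor x u →
      ∃ n, ∀ a, u <:+: substIter σ n a ∧ (substIter σ n a).length ≤ K * u.length := by
  obtain ⟨k, hk⟩ := hσ.exists_forall_seg_infix_substIter hx 2
  obtain ⟨M, hM⟩ := exists_forall_length_le (substIter σ k)
  obtain ⟨C, hC⟩ := hσ.exists_length_substIter_comparable
  refine ⟨M * C, fun u ⟨hu0, i, hi⟩ => ?_⟩
  have hpos : 0 < u.length := List.length_pos_of_ne_nil hu0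
  obtain ⟨n, hn⟩ := hC u.length hpos
  obtain ⟨t, ht⟩ :=
    (hx.substIter n).exists_seg_infix_substApply_pair hpos (fun a => (hn a).1) i
  rw [← hi] at ht
  refine ⟨n + k, fun a => ⟨?_, ?_⟩⟩
  · rw [substIter_add]
    exact ht.trans ((hk t a).flatMap _)
  · calc (substIter σ (n + k) a).length
        = (substApply (substIter σ k) (substIter σ n a)).length := by
          rw [add_comm, substIter_add]
      _ ≤ M * (substIter σ n a).length := length_substApply_le hM _
      _ ≤ M * (C * u.length) := Nat.mul_le_mul_left _ (hn a).2
      _ = M * C * u.length := (mul_assoc ..).symm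

lemma Primitive.exists_boundedGaps [Finite A] (hσ : Primitive σ) (hx : IsFixedPoint σ x) :
    ∃ K, ∀ u, IsFactor x u → BoundedGaps x u (K * u.length) := by
  rcases subsingleton_or_nontrivial A with _ | _
  · refine ⟨1, fun u ⟨hu0, i, hi⟩ q => ⟨q, le_rfl, ?_, ?_⟩⟩
    · simpa using List.length_pos_of_ne_nil hu0
    · rw [Subsingleton.elim x fun _ => x 0] at hi ⊢
      exact hi
  · obtain ⟨K, hK⟩ := hσ.exists_infix_substIter_length_le hx
    refine ⟨2 * K, fun u hu => ?_⟩
    obtain ⟨n, hn⟩ := hK u hu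
    rw [mul_assoc]
    exact (hx.substIter n).boundedGaps_of_forall_infix hu.1 (fun a => (hn a).1) fun a => (hn a).2

theorem stmt15_general (hσ : Primitive σ) (hx : IsFixedPoint σ x) :
    ∃ K : ℕ, UniformlyRecurrent x ∧
      ∀ u, IsFactor x u → ∀ w ∈ Ret x u, w.length ≤ K * u.length := by
  have : Nonempty A := ⟨x 0⟩
  have := hσ.finite
  obtain ⟨K, hK⟩ := hσ.exists_boundedGaps hx
  refine ⟨2 * K, fun u hu => ⟨(hK u hu).ret_nonempty hu.1, (hK u hu).ret_finite⟩,
    fun u hu w hw => ?_⟩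
  rw [mul_assoc]
  exact (hK u hu).length_le_of_isReturn hw

end LinearRecurrence

/-- If `x` is an aperiodic fixed point of a primitive substitution over
a finite alphabet, then `x` is linearly recurrent: `x` is uniformly recurrent and there
is a constant `K` such that every return word `w` to any factor `u` of `x` satisfies
`|w| ≤ K·|u|`. -/
theorem stmt15 {A : Type*} [Fintype A] (σ : A → List A) (hσ : ∀ a, σ a ≠ [])
    (hprim : Primitive σ) (x : ℕ → A) (hfix : IsFixedPoint σ x) (hAp : Aperiodic x) :
    ∃ K : ℕ, UniformlyRecurrent x ∧
      ∀ u, IsFactor x u → ∀ w ∈ Ret x u, w.length ≤ K * u.length :=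
  stmt15_general hprim hfix
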